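/- Let X be a connected chordal bipartite T_2-free graph, let α be a vertex of X, and let (Ω,S) be a coherent configuration on the vertex set Ω of X compatible with X in which α is distinguished. Let Δ, Γ, Λ be pairwise distinct fibers of (Ω,S) such that at least one edge of X joins Δ to Γ, and such that e_{Δ,Γ} is strictly contained in e_{Δ,Λ}. Then ‖e_{Δ,Γ}‖ = 2·‖e_{Δ,Λ}‖. -/

import Mathlib

open SimpleGraph

/-- A coherent configuration on a set `Ω`: a partition `S` of `Ω × Ω` into nonempty
binary relations such that the diagonal is a union of elements of `S`, the converse of
every element of `S` belongs to `S`, and the intersection numbers are well defined. -/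
structure CoherentConfiguration (Ω : Type*) where
  S : Set (Set (Ω × Ω))
  nonempty_mem : ∀ s ∈ S, s.Nonempty
  partition : ∀ p : Ω × Ω, ∃! s, s ∈ S ∧ p ∈ s
  diag_union : ∀ s ∈ S, (∃ p ∈ s, p.1 = p.2) → ∀ p ∈ s, p.1 = p.2
  converse_mem : ∀ s ∈ S, {p : Ω × Ω | (p.2, p.1) ∈ s} ∈ S
  regularity : ∀ r ∈ S, ∀ s ∈ S, ∀ t ∈ S, ∀ p ∈ t, ∀ q ∈ t,
    {γ : Ω | (p.1, γ) ∈ r ∧ (γ, p.2) ∈ s}.ncard =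
      {γ : Ω | (q.1, γ) ∈ r ∧ (γ, q.2) ∈ s}.ncard

/-- `Δ` is a fiber of the coherent configuration, i.e. `{(δ,δ) : δ ∈ Δ} ∈ S`. -/
def CoherentConfiguration.IsFiber {Ω : Type*} (C : CoherentConfiguration Ω)
    (Δ : Set Ω) : Prop :=
  {p : Ω × Ω | p.1 = p.2 ∧ p.1 ∈ Δ} ∈ C.S

/-- The coherent configuration is compatible with the graph `X`: the arc set of `X`
is a union of elements of `S`. -/
def CoherentConfiguration.Compatible {Ω : Type*} (C : CoherentConfiguration Ω)
    (X : SimpleGraph Ω) : Prop :=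
  ∀ s ∈ C.S, (∃ p ∈ s, X.Adj p.1 p.2) → ∀ p ∈ s, X.Adj p.1 p.2

/-- The vertex `α` is distinguished in the coherent configuration: `{(α,α)} ∈ S`. -/
def CoherentConfiguration.Distinguished {Ω : Type*} (C : CoherentConfiguration Ω)
    (α : Ω) : Prop :=
  ({(α, α)} : Set (Ω × Ω)) ∈ C.S

/-- `P`, `Q` form a bipartition of the graph `X`. -/
def IsBipartition {V : Type*} (X : SimpleGraph V) (P Q : Set V) : Prop :=
  (∀ v, v ∈ P ∨ v ∈ Q) ∧ Disjoint P Q ∧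
    ∀ u v, X.Adj u v → (u ∈ P ∧ v ∈ Q) ∨ (u ∈ Q ∧ v ∈ P)

/-- `X` contains no induced cycle of length at least 6. -/
def NoLongInducedCycle {V : Type*} (X : SimpleGraph V) : Prop :=
  ∀ n : ℕ, 6 ≤ n → IsEmpty (SimpleGraph.cycleGraph n ↪g X)

/-- The equivalence relation `e_{Δ,Γ}` on `Δ`: two vertices of `Δ` are equivalent iff
they have the same neighbors in `Γ`; viewed as a set of pairs. -/
def eRel {V : Type*} (X : SimpleGraph V) (Δ Γ : Set V) : Set (V × V) :=
  {p | p.1 ∈ Δ ∧ p.2 ∈ Δ ∧ X.neighborSet p.1 ∩ Γ = X.neighborSet p.2 ∩ Γ}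

/-- The number `‖e_{Δ,Γ}‖` of classes of the equivalence relation `e_{Δ,Γ}`,
i.e. the number of distinct sets of the form `N(δ) ∩ Γ` for `δ ∈ Δ`. -/
noncomputable def numClasses {V : Type*} (X : SimpleGraph V) (Δ Γ : Set V) : ℕ :=
  ((fun δ => X.neighborSet δ ∩ Γ) '' Δ).ncard

/-- The bipartite claw `T₂`: the tree on 7 vertices obtained from the star `K_{1,3}`
by subdividing each edge once (center 0, middle vertices 1,2,3, leaves 4,5,6). -/
def bipartiteClaw : SimpleGraph (Fin 7) :=
  SimpleGraph.fromRel (fun a b =>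
    (a, b) ∈ ({(0, 1), (0, 2), (0, 3), (1, 4), (2, 5), (3, 6)} : Set (Fin 7 × Fin 7)))

/-- `X` contains no induced subgraph isomorphic to the bipartite claw `T₂`. -/
def T2Free {V : Type*} (X : SimpleGraph V) : Prop :=
  IsEmpty (bipartiteClaw ↪g X)


/-- `f 0, ..., f n` is an induced path inside `T`. -/
def IndPath {V : Type*} (X : SimpleGraph V) (T : Set V) (f : ℕ → V) (n : ℕ) : Prop :=
  (∀ i ≤ n, f i ∈ T) ∧
  (∀ i ≤ n, ∀ j ≤ n, f i = f j → i = j) ∧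
  (∀ i ≤ n, ∀ j ≤ n, X.Adj (f i) (f j) ↔ (i + 1 = j ∨ j + 1 = i))

theorem bip_color {V : Type*} {X : SimpleGraph V} {P Q : Set V} (h : IsBipartition X P Q)
    {u v : V} (a : X.Adj u v) : (u ∈ P ↔ v ∉ P) := by
  have hd := Set.disjoint_left.mp h.2.1
  rcases h.2.2 u v a with ⟨h1, h2⟩ | ⟨h1, h2⟩
  · exact ⟨fun _ h3 => hd h3 h2, fun _ => h1⟩
  · exact ⟨fun h3 => absurd h1 (hd h3), fun h3 => absurd h2 h3⟩

theorem cycle_of_path {V : Type*} {X : SimpleGraph V} {T : Set V} {f : ℕ → V} {n k : ℕ} {w : V}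
    (hch : NoLongInducedCycle X) (hp : IndPath X T f n) (hk : k + 4 ≤ n)
    (hwn : X.Adj w (f n)) (hwk : X.Adj w (f k))
    (hw : ∀ i, k < i → i < n → ¬ X.Adj w (f i)) : False := by
  obtain ⟨-, hinj, hadj⟩ := hp
  have hwf : ∀ i, k ≤ i → i ≤ n → w ≠ f i := by
    intro i hi hin e
    have h1 := (hadj i hin n le_rfl).1 (e ▸ hwn)
    have h2 := (hadj i hin k (by omega)).1 (e ▸ hwk)
    omega
  have hwa : ∀ i, k ≤ i → i ≤ n → (X.Adj w (f i) ↔ (i = k ∨ i = n)) := by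
    intro i hi hin
    constructor
    · intro h
      by_contra hc
      exact hw i (by omega) (by omega) h
    · rintro (rfl | rfl) <;> assumption
  refine (hch (n - k + 2) (by omega)).false ⟨⟨fun i => if k + i.1 ≤ n then f (k + i.1) else w, ?_⟩, ?_⟩
  · intro i j hij
    have hi := i.2
    have hj := j.2
    apply Fin.ext
    dsimp only at hij
    split_ifs at hij with h1 h2 h2
    · have := hinj _ h1 _ h2 hij
      omega
    · exact absurd hij.symm (hwf _ (by omega) h1)
    · exact absurd hij (hwf _ (by omega) h2)
    · omega
  · intro i j
    have hi := i.2
    have hj := j.2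
    rw [cycleGraph_adj']
    change X.Adj (if k + i.1 ≤ n then f (k + i.1) else w) (if k + j.1 ≤ n then f (k + j.1) else w) ↔ _
    have hs : ∀ a b : Fin (n - k + 2), (a - b).1 = if b.1 ≤ a.1 then a.1 - b.1 else (n - k + 2) + a.1 - b.1 := by
      intro a b
      have ha := a.2
      have hb := b.2
      split_ifs with h
      · exact Fin.sub_val_of_le h
      · rw [Fin.coe_sub_iff_lt.2 (by simpa using h)]
    rw [hs, hs]
    split_ifs with h1 h2 h3 h3 h3 h3 h3 h3 h3 <;>
      first
      | (rw [hadj _ (by omega) _ (by omega)]; omega)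
      | (rw [hwa _ (by omega) (by omega)]; omega)
      | (rw [X.adj_comm, hwa _ (by omega) (by omega)]; omega)
      | (simp only [SimpleGraph.irrefl, false_iff]; omega)
      | omega

theorem path_extend {V : Type*} [Finite V] {X : SimpleGraph V} {P Q : Set V}
    (hb : IsBipartition X P Q)
    {T : Set V} {f : ℕ → V} {n : ℕ}
    (hch : NoLongInducedCycle X)
    (hdeg : ∀ u ∈ T, ∀ v ∈ T, ∀ c ∈ T, X.Adj u c → X.Adj v c →
      (X.neighborSet u ∩ T).ncard = (X.neighborSet v ∩ T).ncard)
    (hn : 3 ≤ n) (hp : IndPath X T f n) : ∃ g, IndPath X T g (n + 1) := by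
  have hp' := hp
  obtain ⟨hT, hinj, hadj⟩ := hp'
  obtain ⟨m, rfl⟩ : ∃ m, n = m + 3 := ⟨n - 3, by omega⟩
  have a1 : X.Adj (f (m+3)) (f (m+2)) := (hadj _ (by omega) _ (by omega)).2 (by omega)
  have a2 : X.Adj (f (m+1)) (f (m+2)) := (hadj _ (by omega) _ (by omega)).2 (by omega)
  have a3 : X.Adj (f (m+1)) (f m) := (hadj _ (by omega) _ (by omega)).2 (by omega)
  have a4 : ¬ X.Adj (f (m+3)) (f m) := fun h => by
    have := (hadj _ (by omega) _ (by omega)).1 h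
    omega
  have hc := hdeg _ (hT (m+3) (by omega)) _ (hT (m+1) (by omega)) _ (hT (m+2) (by omega)) a1 a2
  have hns : ¬ (X.neighborSet (f (m+3)) ∩ T ⊆ X.neighborSet (f (m+1)) ∩ T) := by
    intro h
    have := Set.eq_of_subset_of_ncard_le h hc.ge (Set.toFinite _)
    have h2 : f m ∈ X.neighborSet (f (m+1)) ∩ T := ⟨a3, hT m (by omega)⟩
    rw [← this] at h2
    exact a4 h2.1
  obtain ⟨w, ⟨hw1, hwT⟩, hw2⟩ := Set.not_subset.1 hns
  replace hw1 : X.Adj (f (m+3)) w := hw1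
  have hw3 : ¬ X.Adj (f (m+1)) w := fun h => hw2 ⟨h, hwT⟩
  have hex : ∀ k, k < m + 3 → ¬ X.Adj w (f k) := by
    by_contra hcon
    push Not at hcon
    obtain ⟨k0, hk0, hk0a⟩ := hcon
    classical
    let p : ℕ → Prop := fun k => X.Adj w (f k)
    have hg1 : p (Nat.findGreatest p (m+2)) := Nat.findGreatest_spec (P := p) (by omega : k0 ≤ m+2) hk0a
    have hg2 : Nat.findGreatest p (m+2) ≤ m+2 := Nat.findGreatest_le _
    have hg3 : ∀ i, Nat.findGreatest p (m+2) < i → i ≤ m+2 → ¬ p i := fun i h1 h2 =>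
      Nat.findGreatest_is_greatest h1 h2
    generalize Nat.findGreatest p (m+2) = k at hg1 hg2 hg3
    have c1 := bip_color hb a1
    have c2 := bip_color hb a2
    have c3 := bip_color hb a3
    have c4 := bip_color hb hw1
    have c5 := bip_color hb hg1
    have n1 : k ≠ m + 2 := by rintro rfl; tauto
    have n2 : k ≠ m + 1 := by rintro rfl; exact hw3 hg1.symm
    have n3 : k ≠ m := by rintro rfl; tauto
    exact cycle_of_path hch hp (by omega) hw1.symm hg1 (fun i h1 h2 => hg3 i h1 (by omega))
  have hne : ∀ i, i ≤ m + 3 → f i ≠ w := by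
    rintro i hi rfl
    have := (hadj _ (by omega) _ hi).1 hw1
    have e : i = m + 2 := by omega
    subst e
    exact hw3 a2
  refine ⟨Function.update f (m+4) w, ?_, ?_, ?_⟩
  · intro i hi
    by_cases h : i = m + 4
    · subst h; simpa using hwT
    · rw [Function.update_of_ne h]; exact hT i (by omega)
  · intro i hi j hj
    by_cases h : i = m + 4 <;> by_cases h' : j = m + 4
    · omega
    · subst h
      rw [Function.update_self, Function.update_of_ne h']
      intro e
      exact absurd e.symm (hne j (by omega))
    · subst h'
      rw [Function.update_self, Function.update_of_ne h]
      intro e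
      exact absurd e (hne i (by omega))
    · rw [Function.update_of_ne h, Function.update_of_ne h']
      exact hinj i (by omega) j (by omega)
  · have key : ∀ j, j ≤ m + 3 → (X.Adj w (f j) ↔ j = m + 3) := by
      intro j hj
      constructor
      · intro h
        by_contra h2
        exact hex j (by omega) h
      · rintro rfl; exact hw1.symm
    intro i hi j hj
    by_cases h : i = m + 4 <;> by_cases h' : j = m + 4
    · subst h; subst h'; simp
    · subst h
      rw [Function.update_self, Function.update_of_ne h', key j (by omega)]
      omega
    · subst h'
      rw [Function.update_self, Function.update_of_ne h, X.adj_comm, key i (by omega)]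
      omega
    · rw [Function.update_of_ne h, Function.update_of_ne h']
      exact hadj i (by omega) j (by omega)

theorem no_long_path {V : Type*} [Fintype V] {X : SimpleGraph V} {P Q : Set V}
    (hb : IsBipartition X P Q) {T : Set V} {f : ℕ → V}
    (hch : NoLongInducedCycle X)
    (hdeg : ∀ u ∈ T, ∀ v ∈ T, ∀ c ∈ T, X.Adj u c → X.Adj v c →
      (X.neighborSet u ∩ T).ncard = (X.neighborSet v ∩ T).ncard)
    (hp : IndPath X T f 3) : False := by
  have : ∀ n, ∃ g, IndPath X T g (n + 3) := by
    intro n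
    induction n with
    | zero => exact ⟨f, hp⟩
    | succ n ih =>
      obtain ⟨g, hg⟩ := ih
      exact path_extend hb hch hdeg (by omega) hg
  obtain ⟨g, -, hg, -⟩ := this (Fintype.card V)
  have := Fintype.card_le_of_injective (fun i : Fin (Fintype.card V + 1) => g i.1) (by
    intro i j h
    have hi := i.2
    have hj := j.2
    exact Fin.ext (hg i.1 (by omega) j.1 (by omega) h))
  simp at this

/-- In a locally biregular chordal bipartite graph, vertices with a common neighbour are twins. -/
theorem twins {V : Type*} [Fintype V] {X : SimpleGraph V} {P Q : Set V}
    (hb : IsBipartition X P Q) {T : Set V}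
    (hch : NoLongInducedCycle X)
    (hdeg : ∀ u ∈ T, ∀ v ∈ T, ∀ c ∈ T, X.Adj u c → X.Adj v c →
      (X.neighborSet u ∩ T).ncard = (X.neighborSet v ∩ T).ncard)
    {u v c g : V} (hu : u ∈ T) (hv : v ∈ T) (hc : c ∈ T) (hg : g ∈ T)
    (huc : X.Adj u c) (hvc : X.Adj v c) (hug : X.Adj u g) : X.Adj v g := by
  by_contra hvg
  have c1 := bip_color hb huc
  have c2 := bip_color hb hvc
  have c3 := bip_color hb hug
  have e1 : ¬ X.Adj g c := fun h => by have := bip_color hb h; tauto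
  have e2 : ¬ X.Adj u v := fun h => by have := bip_color hb h; tauto
  have n1 : g ≠ u := hug.ne'
  have n2 : g ≠ c := by rintro rfl; exact hvg hvc
  have n3 : g ≠ v := by rintro rfl; tauto
  have n4 : u ≠ c := huc.ne
  have n5 : u ≠ v := by rintro rfl; exact hvg hug
  have n6 : c ≠ v := hvc.ne'
  have hvg' : ¬ X.Adj g v := fun h => hvg h.symm
  have e1' : ¬ X.Adj c g := fun h => e1 h.symm
  have e2' : ¬ X.Adj v u := fun h => e2 h.symm
  refine no_long_path hb (T := T) (f := fun i => if i = 0 then g else if i = 1 then u else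
    if i = 2 then c else v) hch hdeg ⟨?_, ?_, ?_⟩
  · intro i hi
    interval_cases i <;> simp [*]
  · intro i hi j hj
    interval_cases i <;> interval_cases j <;> simp [*, Ne.symm n1, Ne.symm n2, Ne.symm n3, Ne.symm n4, Ne.symm n5, Ne.symm n6]
  · intro i hi j hj
    interval_cases i <;> interval_cases j <;> simp [*, hug.symm, huc.symm, hvc.symm]

theorem t2_contra {V : Type*} {X : SimpleGraph V} {P Q : Set V}
    (hb : IsBipartition X P Q) (hT2 : T2Free X) {c : V} {a b : Fin 3 → V}
    (hca : ∀ i, X.Adj c (a i)) (hab : ∀ i j, X.Adj (a i) (b j) ↔ i = j) : False := by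
  have cc := fun i => bip_color hb (hca i)
  have cb := fun i => bip_color hb ((hab i i).2 rfl)
  have naa : ∀ i j, ¬ X.Adj (a i) (a j) := fun i j h => by
    have := bip_color hb h; have := cc i; have := cc j; tauto
  have nbb : ∀ i j, ¬ X.Adj (b i) (b j) := fun i j h => by
    have := bip_color hb h; have := cc i; have := cc j; have := cb i; have := cb j; tauto
  have ncb : ∀ i, ¬ X.Adj c (b i) := fun i h => by
    have := bip_color hb h; have := cc i; have := cb i; tauto
  have ncb' : ∀ i, ¬ X.Adj (b i) c := fun i h => ncb i h.symm
  have hac := fun i => (hca i).symm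
  have hba : ∀ i j, X.Adj (b i) (a j) ↔ i = j := fun i j => by rw [X.adj_comm, hab, eq_comm]
  let f : Fin 7 → V := ![c, a 0, a 1, a 2, b 0, b 1, b 2]
  have hadj : ∀ i j, X.Adj (f i) (f j) ↔ bipartiteClaw.Adj i j := by
    intro i j
    fin_cases i <;> fin_cases j <;> simp [f, bipartiteClaw, hca, hab, hac, hba, naa, nbb, ncb, ncb']
  have hinj : Function.Injective f := by
    intro i j hij
    have h : ∀ k, bipartiteClaw.Adj i k ↔ bipartiteClaw.Adj j k := fun k => by
      rw [← hadj, ← hadj, hij]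
    revert h
    clear hij
    have hd : ∀ i j : Fin 7, bipartiteClaw.Adj i j ↔ (i, j) ∈
      ([(0,1),(0,2),(0,3),(1,4),(2,5),(3,6),(1,0),(2,0),(3,0),(4,1),(5,2),(6,3)] : List (Fin 7 × Fin 7)) := by
      intro i j
      fin_cases i <;> fin_cases j <;> simp [bipartiteClaw]
    simp only [hd]
    revert i j
    decide
  exact hT2.false ⟨⟨f, hinj⟩, fun {i j} => hadj i j⟩

section coherent
variable {Ω : Type*} (C : CoherentConfiguration Ω)

theorem cc_unique {r s : Set (Ω × Ω)} (hr : r ∈ C.S) (hs : s ∈ C.S) {p : Ω × Ω}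
    (h1 : p ∈ r) (h2 : p ∈ s) : r = s :=
  (C.partition p).unique ⟨hr, h1⟩ ⟨hs, h2⟩

theorem cc_rel (p : Ω × Ω) : ∃ s ∈ C.S, p ∈ s := by
  obtain ⟨s, hs, -⟩ := C.partition p
  exact ⟨s, hs.1, hs.2⟩

theorem cc_fiber (v : Ω) : ∃ F, C.IsFiber F ∧ v ∈ F := by
  obtain ⟨s, hs, hv⟩ := cc_rel C (v, v)
  refine ⟨{w | (w, w) ∈ s}, ?_, hv⟩
  have : {p : Ω × Ω | p.1 = p.2 ∧ p.1 ∈ {w | (w, w) ∈ s}} = s := by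
    ext ⟨a, b⟩
    simp only [Set.mem_setOf_eq]
    constructor
    · rintro ⟨rfl, h⟩; exact h
    · intro h
      have e : a = b := C.diag_union s hs ⟨_, hv, rfl⟩ _ h
      subst e
      exact ⟨rfl, h⟩
  unfold CoherentConfiguration.IsFiber
  rw [this]
  exact hs

theorem cc_out {Δ : Set Ω} (hΔ : C.IsFiber Δ) {u v : Ω} (hu : u ∈ Δ) (hv : v ∈ Δ)
    {r : Set (Ω × Ω)} (hr : r ∈ C.S) :
    {γ | (u, γ) ∈ r}.ncard = {γ | (v, γ) ∈ r}.ncard := by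
  have := C.regularity r hr _ (C.converse_mem r hr) _ hΔ (u, u) ⟨rfl, hu⟩ (v, v) ⟨rfl, hv⟩
  simpa using this

theorem cc_out_exists [Finite Ω] {Δ : Set Ω} (hΔ : C.IsFiber Δ) {u v w : Ω} (hu : u ∈ Δ) (hv : v ∈ Δ)
    {r : Set (Ω × Ω)} (hr : r ∈ C.S) (h : (u, w) ∈ r) : ∃ w', (v, w') ∈ r := by
  have := cc_out C hΔ hu hv hr
  have h2 : 0 < {γ | (u, γ) ∈ r}.ncard := (Set.ncard_pos (Set.toFinite _)).2 ⟨w, h⟩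
  rw [this] at h2
  exact (Set.ncard_pos (Set.toFinite _)).1 h2

theorem cc_head [Finite Ω] {Γ : Set Ω} (hΓ : C.IsFiber Γ) {u v w x : Ω}
    {r : Set (Ω × Ω)} (hr : r ∈ C.S) (h : (u, w) ∈ r) (h' : (v, x) ∈ r) (hw : w ∈ Γ) : x ∈ Γ := by
  have := C.regularity r hr _ hΓ r hr (u, w) h (v, x) h'
  have h2 : 0 < {γ : Ω | ((u, w).1, γ) ∈ r ∧ (γ, (u, w).2) ∈ {p : Ω × Ω | p.1 = p.2 ∧ p.1 ∈ Γ}}.ncard :=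
    (Set.ncard_pos (Set.toFinite _)).2 ⟨w, h, rfl, hw⟩
  rw [this] at h2
  obtain ⟨y, -, e, hy⟩ := (Set.ncard_pos (Set.toFinite _)).1 h2
  simp only at e hy
  exact e ▸ hy

theorem cc_nbr [Finite Ω] {X : SimpleGraph Ω} (hcomp : C.Compatible X)
    {Δ Γ : Set Ω} (hΔ : C.IsFiber Δ) (hΓ : C.IsFiber Γ)
    {u v w : Ω} (hu : u ∈ Δ) (hv : v ∈ Δ) (hw : w ∈ Γ) (h : X.Adj u w) :
    ∃ w' ∈ Γ, X.Adj v w' := by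
  obtain ⟨r, hr, huw⟩ := cc_rel C (u, w)
  obtain ⟨w', h'⟩ := cc_out_exists C hΔ hu hv hr huw
  exact ⟨w', cc_head C hΓ hr huw h' hw, hcomp r hr ⟨_, huw, h⟩ _ h'⟩

theorem cc_deg_le [Fintype Ω] {X : SimpleGraph Ω} (hcomp : C.Compatible X)
    {Δ Γ : Set Ω} (hΔ : C.IsFiber Δ) (hΓ : C.IsFiber Γ)
    {u v : Ω} (hu : u ∈ Δ) (hv : v ∈ Δ) :
    (X.neighborSet u ∩ Γ).ncard ≤ (X.neighborSet v ∩ Γ).ncard := by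
  classical
  choose F hF1 hF2 using cc_rel C
  have hFe : ∀ p, ∀ r ∈ C.S, (F p = r ↔ p ∈ r) := fun p r hr =>
    ⟨fun h => h ▸ hF2 p, fun h => cc_unique C (hF1 p) hr (hF2 p) h⟩
  rw [Set.ncard_eq_toFinset_card', Set.ncard_eq_toFinset_card']
  rw [Finset.card_eq_sum_card_fiberwise (f := fun γ => F (u, γ)) (t := Finset.univ) (by simp),
    Finset.card_eq_sum_card_fiberwise (f := fun γ => F (v, γ)) (t := Finset.univ) (by simp)]
  refine Finset.sum_le_sum fun r _ => ?_
  by_cases hne : ∃ g, g ∈ X.neighborSet u ∩ Γ ∧ F (u, g) = r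
  · obtain ⟨g, ⟨hg1, hg2⟩, hgr⟩ := hne
    have hr : r ∈ C.S := hgr ▸ hF1 _
    have hgr' : (u, g) ∈ r := hgr ▸ hF2 _
    have hh := cc_out C hΔ hu hv hr
    rw [Set.ncard_eq_toFinset_card', Set.ncard_eq_toFinset_card'] at hh
    calc _ ≤ ({γ | (u, γ) ∈ r} : Set Ω).toFinset.card := by
          apply Finset.card_le_card
          intro x hx
          simp only [Finset.mem_filter] at hx
          simpa using (hFe _ r hr).1 hx.2
      _ = _ := hh
      _ ≤ _ := by
          apply Finset.card_le_card
          intro x hx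
          have hx' : (v, x) ∈ r := by simpa using hx
          simp only [Finset.mem_filter, Set.mem_toFinset]
          exact ⟨⟨hcomp r hr ⟨_, hgr', hg1⟩ _ hx', cc_head C hΓ hr hgr' hx' hg2⟩,
            (hFe _ r hr).2 hx'⟩
  · rw [Finset.card_eq_zero.2]
    · exact Nat.zero_le _
    · ext x
      simp only [Finset.mem_filter, Set.mem_toFinset, Finset.notMem_empty, iff_false]
      exact fun h => hne ⟨x, h⟩

theorem dist_pred {V : Type*} {X : SimpleGraph V} (hconn : X.Connected) {α v : V} {n : ℕ}
    (h : X.dist α v = n + 1) : ∃ u, X.Adj v u ∧ X.dist α u = n := by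
  obtain ⟨p, hp⟩ := hconn.exists_walk_length_eq_dist v α
  rw [dist_comm, h] at hp
  cases p with
  | nil => simp at hp
  | cons hadj q =>
    rename_i w
    refine ⟨w, hadj, ?_⟩
    have h1 := dist_le q
    simp only [Walk.length_cons] at hp
    have h2 := hconn.dist_triangle (u := α) (v := w) (w := v)
    have h3 := dist_eq_one_iff_adj.2 hadj.symm
    rw [dist_comm] at h1
    omega

theorem dist_color {V : Type*} {X : SimpleGraph V} (hconn : X.Connected) {P Q : Set V}
    (hb : IsBipartition X P Q) (α : V) :
    ∀ n v, X.dist α v = n → (v ∈ P ↔ (α ∈ P ↔ Even n)) := by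
  intro n
  induction n with
  | zero =>
    intro v h
    rw [hconn.dist_eq_zero_iff] at h
    subst h
    simp
  | succ n ih =>
    intro v h
    obtain ⟨u, hu, hd⟩ := dist_pred hconn h
    have := ih u hd
    have := bip_color hb hu
    rw [Nat.even_add_one]
    tauto

theorem adj_levels {V : Type*} {X : SimpleGraph V} (hconn : X.Connected) {P Q : Set V}
    (hb : IsBipartition X P Q) (α : V) {u v : V} (h : X.Adj u v) :
    X.dist α v = X.dist α u + 1 ∨ X.dist α u = X.dist α v + 1 := by
  have h1 := hconn.dist_triangle (u := α) (v := u) (w := v)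
  have h2 := hconn.dist_triangle (u := α) (v := v) (w := u)
  have h3 := dist_eq_one_iff_adj.2 h
  have h4 := dist_eq_one_iff_adj.2 h.symm
  have h5 : X.dist α u ≠ X.dist α v := by
    intro e
    have c1 := dist_color hconn hb α _ u rfl
    have c2 := dist_color hconn hb α _ v rfl
    rw [e] at c1
    have := bip_color hb h
    tauto
  omega

theorem fiber_dist_le [Finite Ω] {X : SimpleGraph Ω} (hconn : X.Connected)
    (hcomp : C.Compatible X) {α : Ω} (hdist : C.Distinguished α) :
    ∀ n (Δ : Set Ω), C.IsFiber Δ → ∀ u ∈ Δ, ∀ v ∈ Δ, X.dist α u = n → X.dist α v ≤ n := by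
  intro n
  induction n with
  | zero =>
    intro Δ hΔ u hu v hv h
    rw [hconn.dist_eq_zero_iff] at h
    subst h
    have e := cc_unique C hΔ hdist (p := (α, α)) ⟨rfl, hu⟩ rfl
    have : (v, v) ∈ ({(α, α)} : Set (Ω × Ω)) := e ▸ ⟨rfl, hv⟩
    simp only [Set.mem_singleton_iff, Prod.mk.injEq, and_self] at this
    subst this
    simp
  | succ n ih =>
    intro Δ hΔ u hu v hv h
    obtain ⟨w, hw, hd⟩ := dist_pred hconn h
    obtain ⟨F, hF, hwF⟩ := cc_fiber C w
    obtain ⟨w', hw', ha⟩ := cc_nbr C hcomp hΔ hF hu hv hwF hw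
    have h1 := ih F hF w hwF w' hw' hd
    have h2 := hconn.dist_triangle (u := α) (v := w') (w := v)
    have h3 := dist_eq_one_iff_adj.2 ha.symm
    omega

theorem fiber_dist [Finite Ω] {X : SimpleGraph Ω} (hconn : X.Connected)
    (hcomp : C.Compatible X) {α : Ω} (hdist : C.Distinguished α)
    {Δ : Set Ω} (hΔ : C.IsFiber Δ) {u v : Ω} (hu : u ∈ Δ) (hv : v ∈ Δ) :
    X.dist α u = X.dist α v :=
  le_antisymm (fiber_dist_le C hconn hcomp hdist _ Δ hΔ v hv u hu rfl)
    (fiber_dist_le C hconn hcomp hdist _ Δ hΔ u hu v hv rfl)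

theorem fiber_twins [Fintype Ω] {X : SimpleGraph Ω} {P Q : Set Ω}
    (hconn : X.Connected) (hb : IsBipartition X P Q) (hch : NoLongInducedCycle X)
    (hcomp : C.Compatible X) {α : Ω} (hdist : C.Distinguished α)
    {Δ Γ : Set Ω} (hΔ : C.IsFiber Δ) (hΓ : C.IsFiber Γ)
    {u v c g : Ω} (hu : u ∈ Δ) (hv : v ∈ Δ) (hc : c ∈ Γ) (hg : g ∈ Γ)
    (huc : X.Adj u c) (hvc : X.Adj v c) (hug : X.Adj u g) : X.Adj v g := by
  have lv := adj_levels hconn hb α huc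
  have key : ∀ (A B : Set Ω), C.IsFiber A → C.IsFiber B → ∀ x ∈ A, X.neighborSet x ∩ (A ∪ B) = X.neighborSet x ∩ B := by
    intro A B hA hB x hx
    ext y
    constructor
    · rintro ⟨h1, h2 | h2⟩
      · exfalso
        have e1 := adj_levels hconn hb α h1
        have e2 := fiber_dist C hconn hcomp hdist hA hx h2
        omega
      · exact ⟨h1, h2⟩
    · rintro ⟨h1, h2⟩; exact ⟨h1, Or.inr h2⟩
  have key2 : ∀ (A B : Set Ω), C.IsFiber A → C.IsFiber B → ∀ x ∈ A, ∀ y ∈ A,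
      (X.neighborSet x ∩ (A ∪ B)).ncard = (X.neighborSet y ∩ (A ∪ B)).ncard := by
    intro A B hA hB x hx y hy
    rw [key A B hA hB x hx, key A B hA hB y hy]
    exact le_antisymm (cc_deg_le C hcomp hA hB hx hy) (cc_deg_le C hcomp hA hB hy hx)
  refine twins hb (T := Δ ∪ Γ) hch ?_ (Or.inl hu) (Or.inl hv) (Or.inr hc) (Or.inr hg) huc hvc hug
  intro x hx y hy z hz hxz hyz
  have l1 := adj_levels hconn hb α hxz
  have l2 := adj_levels hconn hb α hyz
  have lD := fun {t} (ht : t ∈ Δ) => fiber_dist C hconn hcomp hdist hΔ hu ht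
  have lG := fun {t} (ht : t ∈ Γ) => fiber_dist C hconn hcomp hdist hΓ hc ht
  rcases hx with hx | hx <;> rcases hy with hy | hy
  · exact key2 Δ Γ hΔ hΓ x hx y hy
  · exfalso
    have := lD hx
    have := lG hy
    rcases hz with hz | hz
    · have := lD hz; omega
    · have := lG hz; omega
  · exfalso
    have := lD hy
    have := lG hx
    rcases hz with hz | hz
    · have := lD hz; omega
    · have := lG hz; omega
  · rw [Set.union_comm]
    exact key2 Γ Δ hΓ hΔ x hx y hy

/-- There is no induced matching of size three between two fibers. -/
theorem no_matching [Fintype Ω] {X : SimpleGraph Ω} {P Q : Set Ω}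
    (hconn : X.Connected) (hb : IsBipartition X P Q) (hch : NoLongInducedCycle X)
    (hT2 : T2Free X)
    (hcomp : C.Compatible X) {α : Ω} (hdist : C.Distinguished α) :
    ∀ (d : ℕ) (Δ Γ : Set Ω), C.IsFiber Δ → C.IsFiber Γ → ∀ y g : Fin 3 → Ω,
      (∀ i, y i ∈ Δ) → (∀ i, g i ∈ Γ) → (∀ i j, X.Adj (y i) (g j) ↔ i = j) →
      (∀ i, X.dist α (y i) = d) → (∀ i, X.dist α (g i) = d + 1) → False := by
  intro d
  induction d with
  | zero =>
    intro Δ Γ hΔ hΓ y g hy hg hyg hdy hdg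
    have e0 := hconn.dist_eq_zero_iff.1 (hdy 0)
    have e1 := hconn.dist_eq_zero_iff.1 (hdy 1)
    have h := (hyg 0 0).2 rfl
    rw [← e0, e1] at h
    exact absurd ((hyg 1 0).1 h) (by decide)
  | succ d ih =>
    intro Δ Γ hΔ hΓ y g hy hg hyg hdy hdg
    obtain ⟨x0, hx0, hdx0⟩ := dist_pred hconn (hdy 0)
    obtain ⟨D, hD, hx0D⟩ := cc_fiber C x0
    have hx : ∀ i, ∃ x ∈ D, X.Adj (y i) x := fun i => cc_nbr C hcomp hΔ hD (hy 0) (hy i) hx0D hx0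
    choose x hxD hyx using hx
    have hDd : ∀ t ∈ D, X.dist α t = d := fun t ht =>
      (fiber_dist C hconn hcomp hdist hD ht hx0D).trans hdx0
    have nall : ∀ t, ¬ ∀ i, X.Adj t (y i) := fun t ht => t2_contra hb hT2 ht hyg
    have nadj : ∀ s t, X.dist α s + 1 < X.dist α t → ¬ X.Adj s t := fun s t hst h => by
      have := adj_levels hconn hb α h
      omega
    have main : ∀ t ∈ D, ∀ i j, X.Adj t (y i) → X.Adj t (y j) → i = j := by
      intro t ht i j hti htj
      by_contra hij
      obtain ⟨k, hk⟩ : ∃ k, ¬ X.Adj t (y k) := not_forall.1 (nall t)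
      have hdt := hDd t ht
      -- an auxiliary claw
      have fin : ∀ z l, X.Adj t z → X.Adj z l → (¬ X.Adj (y i) l) → (¬ X.Adj (y j) l) →
          X.dist α z < d → False := by
        intro z l htz hzl hil hjl hz
        have hzg : ∀ m, ¬ X.Adj z (g m) := fun m => nadj _ _ (by rw [hdg]; omega)
        have hij' : ¬ (j = i) := fun h => hij h.symm
        refine t2_contra hb hT2 (c := t) (a := ![y i, y j, z]) (b := ![g i, g j, l]) ?_ ?_
        · intro m
          fin_cases m <;> simp [*]
        · intro m m'
          fin_cases m <;> fin_cases m' <;> simp [*]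
      match d, hdt with
      | 0, hdt =>
        have e := hconn.dist_eq_zero_iff.1 hdt
        have e2 := hconn.dist_eq_zero_iff.1 (hDd _ (hxD k))
        rw [← e, e2] at hk
        exact hk (hyx k).symm
      | 1, hdt =>
        obtain ⟨z, hz, hdz⟩ := dist_pred hconn hdt
        have e := hconn.dist_eq_zero_iff.1 hdz
        subst e
        have hl : X.Adj α (x k) := dist_eq_one_iff_adj.1 (hDd _ (hxD k))
        have hnn : ∀ m, X.Adj t (y m) → ¬ X.Adj (y m) (x k) := by
          intro m htm hm
          exact hk (fiber_twins C hconn hb hch hcomp hdist hD hΔ (hxD k) ht (hy m) (hy k)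
            hm.symm htm (hyx k).symm)
        exact fin α (x k) hz hl (hnn i hti) (hnn j htj) (by omega)
      | d + 2, hdt =>
        obtain ⟨z, hz, hdz⟩ := dist_pred hconn hdt
        obtain ⟨l, hl, hdl⟩ := dist_pred hconn hdz
        refine fin z l hz hl (fun h => ?_) (fun h => ?_) (by omega)
        · exact nadj l (y i) (by rw [hdy]; omega) h.symm
        · exact nadj l (y j) (by rw [hdy]; omega) h.symm
    refine ih D Δ hD hΔ x y hxD hy (fun i j => ⟨fun h => ?_, ?_⟩) (fun i => hDd _ (hxD i)) hdy
    · exact main _ (hxD i) _ _ (hyx i).symm h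
    · rintro rfl; exact (hyx i).symm

end coherent

theorem stmt_11 {Ω : Type*} [Fintype Ω] (X : SimpleGraph Ω) (P Q : Set Ω)
    (hconn : X.Connected) (hbip : IsBipartition X P Q) (hchordal : NoLongInducedCycle X)
    (hT2 : T2Free X)
    (α : Ω) (C : CoherentConfiguration Ω)
    (hcomp : C.Compatible X) (hdist : C.Distinguished α)
    (Δ Γ Λ : Set Ω) (hΔ : C.IsFiber Δ) (hΓ : C.IsFiber Γ) (hΛ : C.IsFiber Λ)
    (hΔΓ : Δ ≠ Γ) (hΔΛ : Δ ≠ Λ) (hΓΛ : Γ ≠ Λ)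
    (hedge : ∃ u ∈ Δ, ∃ v ∈ Γ, X.Adj u v)
    (hstrict : eRel X Δ Γ ⊂ eRel X Δ Λ) :
    numClasses X Δ Γ = 2 * numClasses X Δ Λ := by
  obtain ⟨hsub, hns⟩ := hstrict
  obtain ⟨⟨a, b⟩, ⟨ha, hb, hab⟩, hnab⟩ := Set.not_subset.1 hns
  simp only at ha hb hab
  have hnab' : X.neighborSet a ∩ Γ ≠ X.neighborSet b ∩ Γ := fun h => hnab ⟨ha, hb, h⟩
  obtain ⟨u0, hu0, v0, hv0, huv⟩ := hedge
  have hnb : ∀ u ∈ Δ, ∃ v ∈ Γ, X.Adj u v := fun u hu => cc_nbr C hcomp hΔ hΓ hu0 hu hv0 huv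
  -- two vertices with a common neighbour in Γ are equivalent
  have htw : ∀ u ∈ Δ, ∀ v ∈ Δ, ∀ c ∈ Γ, X.Adj u c → X.Adj v c →
      X.neighborSet u ∩ Γ = X.neighborSet v ∩ Γ := by
    intro u hu v hv c hc h1 h2
    ext g
    constructor
    · rintro ⟨h, hg⟩
      exact ⟨fiber_twins C hconn hbip hchordal hcomp hdist hΔ hΓ hu hv hc hg h1 h2 h, hg⟩
    · rintro ⟨h, hg⟩
      exact ⟨fiber_twins C hconn hbip hchordal hcomp hdist hΔ hΓ hv hu hc hg h2 h1 h, hg⟩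
  have two : ∀ c ∈ Δ, X.neighborSet c ∩ Γ = X.neighborSet a ∩ Γ ∨
      X.neighborSet c ∩ Γ = X.neighborSet b ∩ Γ := by
    intro c hc
    by_contra hcon
    push Not at hcon
    obtain ⟨hca, hcb⟩ := hcon
    obtain ⟨ga, hga, haga⟩ := hnb a ha
    obtain ⟨gb, hgb, hbgb⟩ := hnb b hb
    obtain ⟨gc, hgc, hcgc⟩ := hnb c hc
    let y : Fin 3 → Ω := ![a, b, c]
    let g : Fin 3 → Ω := ![ga, gb, gc]
    have hy : ∀ i, y i ∈ Δ := by intro i; fin_cases i <;> simp [y, *]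
    have hg : ∀ i, g i ∈ Γ := by intro i; fin_cases i <;> simp [g, *]
    have n1 : ¬ X.Adj a gb := fun h => hnab' (htw _ ha _ hb _ hgb h hbgb)
    have n2 : ¬ X.Adj a gc := fun h => hca (htw _ hc _ ha _ hgc hcgc h)
    have n3 : ¬ X.Adj b ga := fun h => hnab' (htw _ ha _ hb _ hga haga h)
    have n4 : ¬ X.Adj b gc := fun h => hcb (htw _ hc _ hb _ hgc hcgc h)
    have n5 : ¬ X.Adj c ga := fun h => hca (htw _ hc _ ha _ hga h haga)
    have n6 : ¬ X.Adj c gb := fun h => hcb (htw _ hc _ hb _ hgb h hbgb)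
    have hyg : ∀ i j, X.Adj (y i) (g j) ↔ i = j := by
      intro i j
      fin_cases i <;> fin_cases j <;> simp [y, g, haga, hbgb, hcgc, n1, n2, n3, n4, n5, n6]
    have hgy : ∀ i j, X.Adj (g i) (y j) ↔ i = j := fun i j => by
      rw [X.adj_comm, hyg, eq_comm]
    have ly : ∀ i, X.dist α (y i) = X.dist α u0 := fun i =>
      fiber_dist C hconn hcomp hdist hΔ (hy i) hu0
    have lg : ∀ i, X.dist α (g i) = X.dist α v0 := fun i =>
      fiber_dist C hconn hcomp hdist hΓ (hg i) hv0
    rcases adj_levels hconn hbip α huv with h | h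
    · exact no_matching C hconn hbip hchordal hT2 hcomp hdist _ Δ Γ hΔ hΓ y g hy hg hyg ly
        (fun i => (lg i).trans h)
    · exact no_matching C hconn hbip hchordal hT2 hcomp hdist _ Γ Δ hΓ hΔ g y hg hy hgy lg
        (fun i => (ly i).trans h)
  have i1 : (fun δ => X.neighborSet δ ∩ Γ) '' Δ = {X.neighborSet a ∩ Γ, X.neighborSet b ∩ Γ} := by
    ext s
    simp only [Set.mem_image, Set.mem_insert_iff, Set.mem_singleton_iff]
    constructor
    · rintro ⟨c, hc, rfl⟩; exact two c hc
    · rintro (rfl | rfl)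
      · exact ⟨a, ha, rfl⟩
      · exact ⟨b, hb, rfl⟩
  have i2 : (fun δ => X.neighborSet δ ∩ Λ) '' Δ = {X.neighborSet a ∩ Λ} := by
    ext s
    simp only [Set.mem_image, Set.mem_singleton_iff]
    constructor
    · rintro ⟨c, hc, rfl⟩
      rcases two c hc with h | h
      · exact (hsub (show (c, a) ∈ eRel X Δ Γ from ⟨hc, ha, h⟩)).2.2
      · exact (hsub (show (c, b) ∈ eRel X Δ Γ from ⟨hc, hb, h⟩)).2.2.trans hab.symm
    · rintro rfl; exact ⟨a, ha, rfl⟩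
  unfold numClasses
  rw [i1, i2, Set.ncard_pair hnab', Set.ncard_singleton]
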